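/- Every sequence (f_n) in L⁰(λ) that λ-converges to 0 admits a subsequence (f_{n_k}) such that the set K = {Σ_{k=1}^{K} α_k 2^k |f_{n_k}| : α_1,…,α_K ≥ 0, Σ_{k=1}^{K} α_k ≤ 1, K∈ℕ} is bounded in L⁰(λ). -/

import Mathlib

open Set Filter Topology

namespace FA

/-- An algebra of subsets of `Ω`. -/
structure SetAlg (Ω : Type*) where
  sets : Set (Set Ω)
  empty_mem : ∅ ∈ sets
  compl_mem : ∀ ⦃A⦄, A ∈ sets → Aᶜ ∈ sets
  union_mem : ∀ ⦃A B⦄, A ∈ sets → B ∈ sets → A ∪ B ∈ sets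

/-- A bounded, finitely additive real-valued set function on the algebra `𝒜`,
i.e. an element of `ba(𝒜)`. -/
structure BAMeasure {Ω : Type*} (𝒜 : SetAlg Ω) where
  toFun : Set Ω → ℝ
  map_empty : toFun ∅ = 0
  additive : ∀ ⦃A B : Set Ω⦄, A ∈ 𝒜.sets → B ∈ 𝒜.sets → Disjoint A B →
      toFun (A ∪ B) = toFun A + toFun B
  bounded : ∃ M : ℝ, ∀ A ∈ 𝒜.sets, |toFun A| ≤ M

variable {Ω : Type*} {𝒜 : SetAlg Ω}

/-- Total variation `|λ|(A) = λ⁺(A) + λ⁻(A)`. -/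
noncomputable def var (lam : BAMeasure 𝒜) (A : Set Ω) : ℝ :=
  sSup {x | ∃ B ∈ 𝒜.sets, B ⊆ A ∧ x = lam.toFun B} +
  sSup {x | ∃ B ∈ 𝒜.sets, B ⊆ A ∧ x = -lam.toFun B}

/-- The outer measure `|λ|*(B) = inf {|λ|(A) : A ∈ 𝒜, B ⊆ A}`. -/
noncomputable def outer (lam : BAMeasure 𝒜) (B : Set Ω) : ℝ :=
  sInf {x | ∃ A ∈ 𝒜.sets, B ⊆ A ∧ x = var lam A}

/-- `𝒜`-simple functions. -/
def IsSimple (𝒜 : SetAlg Ω) (f : Ω → ℝ) : Prop :=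
  (Set.range f).Finite ∧ ∀ r : ℝ, f ⁻¹' {r} ∈ 𝒜.sets

/-- `λ`-convergence: `(f n)` converges to `g` in `λ`-measure. -/
def LConv (lam : BAMeasure 𝒜) (f : ℕ → Ω → ℝ) (g : Ω → ℝ) : Prop :=
  ∀ c > (0:ℝ), Tendsto (fun n => outer lam {ω | c < |f n ω - g ω|}) atTop (𝓝 0)

/-- `λ`-Cauchy sequences. -/
def LCauchy (lam : BAMeasure 𝒜) (f : ℕ → Ω → ℝ) : Prop :=
  ∀ c > (0:ℝ), ∀ ε > (0:ℝ), ∃ N : ℕ, ∀ p q : ℕ,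
    outer lam {ω | c < |f (N + p) ω - f (N + q) ω|} < ε

/-- `L⁰(λ)`: `λ`-limits of sequences of `𝒜`-simple functions. -/
def L0 (lam : BAMeasure 𝒜) : Set (Ω → ℝ) :=
  {f | ∃ s : ℕ → Ω → ℝ, (∀ n, IsSimple 𝒜 (s n)) ∧ LConv lam s f}

/-- The metric of `L⁰(λ)`: `d(f,g) = inf {c + |λ|*(|f-g| ≥ c) : c > 0}`. -/
noncomputable def dL0 (lam : BAMeasure 𝒜) (f g : Ω → ℝ) : ℝ :=
  sInf {x | ∃ c > (0:ℝ), x = c + outer lam {ω | c ≤ |f ω - g ω|}}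

/-- A set `K` is bounded in `L⁰(λ)` if `lim_{c→∞} sup_{f∈K} |λ|*(|f|>c) = 0`. -/
def BddL0 (lam : BAMeasure 𝒜) (K : Set (Ω → ℝ)) : Prop :=
  ∀ ε > (0:ℝ), ∃ c₀ : ℝ, ∀ c ≥ c₀, ∀ f ∈ K, outer lam {ω | c < |f ω|} < ε

/-- The nonnegative elements of `L⁰(λ)`. -/
def L0pos (lam : BAMeasure 𝒜) : Set (Ω → ℝ) := {f ∈ L0 lam | ∀ ω, 0 ≤ f ω}

/-- The elementary integral of a simple function with respect to a set function. -/
noncomputable def simpleIntegral (m : Set Ω → ℝ) (f : Ω → ℝ) : ℝ :=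
  ∑ᶠ r : ℝ, r * m (f ⁻¹' {r})

/-- Dunford–Schwartz integrability: there is a sequence of simple functions converging to `f`
in `λ`-measure which is Cauchy in mean. -/
def MemL1 (lam : BAMeasure 𝒜) (f : Ω → ℝ) : Prop :=
  ∃ s : ℕ → Ω → ℝ, (∀ n, IsSimple 𝒜 (s n)) ∧ LConv lam s f ∧
    ∀ ε > (0:ℝ), ∃ N : ℕ, ∀ m ≥ N, ∀ n ≥ N,
      simpleIntegral (var lam) (fun ω => |s m ω - s n ω|) < ε

/-- `L¹(λ)`. -/
def L1 (lam : BAMeasure 𝒜) : Set (Ω → ℝ) := {f | MemL1 lam f}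

open scoped Classical in
/-- The Dunford–Schwartz integral `∫ f dλ`. -/
noncomputable def integral (lam : BAMeasure 𝒜) (f : Ω → ℝ) : ℝ :=
  if h : MemL1 lam f then
    limUnder atTop (fun n => simpleIntegral lam.toFun (h.choose n))
  else 0

open scoped Classical in
/-- The `L¹(λ)` seminorm `∫ |f| d|λ|`. -/
noncomputable def l1Norm (lam : BAMeasure 𝒜) (f : Ω → ℝ) : ℝ :=
  if h : MemL1 lam f then
    limUnder atTop (fun n => simpleIntegral (var lam) (fun ω => |h.choose n ω|))
  else 0

/-- A set is bounded in `L¹(μ)` if the integrals `∫|f| d|μ|` are uniformly bounded. -/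
def BddL1 (mu : BAMeasure 𝒜) (K : Set (Ω → ℝ)) : Prop :=
  ∃ M : ℝ, ∀ f ∈ K, l1Norm mu f ≤ M

/-- Finitely additive probability measures. -/
def IsFAProb (mu : BAMeasure 𝒜) : Prop :=
  mu.toFun Set.univ = 1 ∧ ∀ A ∈ 𝒜.sets, 0 ≤ mu.toFun A

/-- `μ ∈ 𝔓_*(λ)`: a finitely additive probability with `|μ| ≤ c |λ|` and the same null
sets as `λ`. -/
def PStar (lam mu : BAMeasure 𝒜) : Prop :=
  IsFAProb mu ∧ (∃ c : ℝ, 0 ≤ c ∧ ∀ A ∈ 𝒜.sets, var mu A ≤ c * var lam A) ∧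
  ∀ A ∈ 𝒜.sets, (mu.toFun A = 0 ↔ var lam A = 0)

/-- `μ ∈ 𝔓_*(λ; K)`. -/
def PStarWith (lam : BAMeasure 𝒜) (K : Set (Ω → ℝ)) (mu : BAMeasure 𝒜) : Prop :=
  PStar lam mu ∧ K ⊆ L1 mu ∧ BddL1 mu K

/-- `f` is a `λ`-a.s. lower bound of `K`. -/
def ASLowerBound (lam : BAMeasure 𝒜) (f : Ω → ℝ) (K : Set (Ω → ℝ)) : Prop :=
  ∀ c > (0:ℝ), ∀ k ∈ K, outer lam {ω | k ω < f ω - c} = 0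

/-- Absolute continuity `μ ≪ λ` for bounded finitely additive set functions. -/
def AbsCont (mu lam : BAMeasure 𝒜) : Prop :=
  ∀ ε > (0:ℝ), ∃ δ > (0:ℝ), ∀ A ∈ 𝒜.sets, var lam A < δ → var mu A < ε

/-- `λ ∈ ba₀(𝒜)`: the range of `λ` is finite. -/
def FiniteRange (lam : BAMeasure 𝒜) : Prop := (lam.toFun '' 𝒜.sets).Finite

/-- `μ ∈ ba₀(λ)`. -/
def BA0rel (lam mu : BAMeasure 𝒜) : Prop := FiniteRange mu ∧ AbsCont mu lam

/-- Strong continuity: arbitrarily fine finite partitions. -/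
def StronglyContinuous (lam : BAMeasure 𝒜) : Prop :=
  ∀ ε > (0:ℝ), ∃ (N : ℕ) (A : Fin N → Set Ω), (∀ n, A n ∈ 𝒜.sets) ∧
    Pairwise (Function.onFun Disjoint A) ∧ (⋃ n, A n) = Set.univ ∧
    ∀ n, var lam (A n) < ε

/-- Orthogonality of bounded finitely additive set functions. -/
def Orthogonal (mu nu : BAMeasure 𝒜) : Prop :=
  ∀ ε > (0:ℝ), ∃ A ∈ 𝒜.sets, var mu A < ε ∧ var nu Aᶜ < ε

/-- Strong discontinuity: orthogonal to every strongly continuous element of `ba(𝒜)`. -/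
def StronglyDiscontinuous (mu : BAMeasure 𝒜) : Prop :=
  ∀ nu : BAMeasure 𝒜, StronglyContinuous nu → Orthogonal mu nu

/-- Countable additivity of `λ` on the algebra `𝒜`. -/
def CountablyAdditive (lam : BAMeasure 𝒜) : Prop :=
  ∀ A : ℕ → Set Ω, (∀ n, A n ∈ 𝒜.sets) → Pairwise (Function.onFun Disjoint A) →
    (⋃ n, A n) ∈ 𝒜.sets → HasSum (fun n => lam.toFun (A n)) (lam.toFun (⋃ n, A n))

/-- `𝒜` is a σ-algebra. -/
def IsSigmaAlg (𝒜 : SetAlg Ω) : Prop :=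
  ∀ A : ℕ → Set Ω, (∀ n, A n ∈ 𝒜.sets) → (⋃ n, A n) ∈ 𝒜.sets

/-- Linearity of a functional on `L⁰(λ)`. -/
def LinearOnL0 (lam : BAMeasure 𝒜) (φ : (Ω → ℝ) → ℝ) : Prop :=
  (∀ f ∈ L0 lam, ∀ g ∈ L0 lam, φ (f + g) = φ f + φ g) ∧
  (∀ a : ℝ, ∀ f ∈ L0 lam, φ (a • f) = a * φ f)

/-- Continuity of a functional on `L⁰(λ)` with respect to the metric `d`. -/
def ContinuousOnL0 (lam : BAMeasure 𝒜) (φ : (Ω → ℝ) → ℝ) : Prop :=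
  ∀ f ∈ L0 lam, ∀ ε > (0:ℝ), ∃ δ > (0:ℝ), ∀ g ∈ L0 lam, dL0 lam g f < δ → |φ g - φ f| < ε


theorem bddU (lam : BAMeasure 𝒜) (s : ℝ) (hs : |s| = 1) (A : Set Ω) :
    BddAbove {x | ∃ B ∈ 𝒜.sets, B ⊆ A ∧ x = s * lam.toFun B} := by
  obtain ⟨M, hM⟩ := lam.bounded
  refine ⟨M, ?_⟩
  rintro x ⟨B, hB, -, rfl⟩
  have h := le_abs_self (s * lam.toFun B)
  rw [abs_mul, hs, one_mul] at h
  exact h.trans (hM B hB)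

/-- signed upper variation -/
noncomputable def uvar (lam : BAMeasure 𝒜) (s : ℝ) (A : Set Ω) : ℝ :=
  sSup {x | ∃ B ∈ 𝒜.sets, B ⊆ A ∧ x = s * lam.toFun B}

theorem var_eq (lam : BAMeasure 𝒜) (A : Set Ω) :
    var lam A = uvar lam 1 A + uvar lam (-1) A := by
  simp [var, uvar]

theorem uvar_nonneg (lam : BAMeasure 𝒜) (s : ℝ) (hs : |s| = 1) (A : Set Ω) :
    0 ≤ uvar lam s A :=
  le_csSup (bddU lam s hs A) ⟨∅, 𝒜.empty_mem, empty_subset _, by simp [lam.map_empty]⟩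

theorem inter_mem' {A B : Set Ω} (hA : A ∈ 𝒜.sets) (hB : B ∈ 𝒜.sets) : A ∩ B ∈ 𝒜.sets := by
  have := 𝒜.compl_mem (𝒜.union_mem (𝒜.compl_mem hA) (𝒜.compl_mem hB))
  rwa [compl_union, compl_compl, compl_compl] at this

theorem uvar_union (lam : BAMeasure 𝒜) (s : ℝ) (hs : |s| = 1) {A B : Set Ω}
    (hA : A ∈ 𝒜.sets) : uvar lam s (A ∪ B) ≤ uvar lam s A + uvar lam s B := by
  refine csSup_le ⟨_, ∅, 𝒜.empty_mem, empty_subset _, rfl⟩ ?_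
  rintro x ⟨C, hC, hCAB, rfl⟩
  have h1 := inter_mem' hC hA
  have h2 := inter_mem' hC (𝒜.compl_mem hA)
  have h3 : lam.toFun C = lam.toFun (C ∩ A) + lam.toFun (C ∩ Aᶜ) := by
    rw [← lam.additive h1 h2, inter_union_compl]
    exact disjoint_compl_right.mono inter_subset_right inter_subset_right
  rw [h3, mul_add]
  refine add_le_add (le_csSup (bddU lam s hs A) ⟨_, h1, inter_subset_right, rfl⟩)
    (le_csSup (bddU lam s hs B) ⟨_, h2, ?_, rfl⟩)
  rintro x ⟨hx, hxA⟩
  exact (hCAB hx).resolve_left hxA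

theorem var_nonneg (lam : BAMeasure 𝒜) (A : Set Ω) : 0 ≤ var lam A := by
  rw [var_eq]
  exact add_nonneg (uvar_nonneg lam 1 (by simp) A) (uvar_nonneg lam (-1) (by simp) A)

theorem var_union (lam : BAMeasure 𝒜) {A B : Set Ω}
    (hA : A ∈ 𝒜.sets) : var lam (A ∪ B) ≤ var lam A + var lam B := by
  simp only [var_eq]
  linarith [uvar_union lam 1 (by simp) (B := B) hA, uvar_union lam (-1) (by simp) (B := B) hA]

theorem var_empty (lam : BAMeasure 𝒜) : var lam ∅ = 0 := by
  have h : ∀ s : ℝ, |s| = 1 → uvar lam s ∅ ≤ 0 := fun s hs => by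
    refine csSup_le ⟨_, ∅, 𝒜.empty_mem, empty_subset _, rfl⟩ ?_
    rintro x ⟨C, hC, hCe, rfl⟩
    rw [subset_empty_iff.1 hCe, lam.map_empty, mul_zero]
  have := var_nonneg lam ∅
  rw [var_eq] at this ⊢
  linarith [h 1 (by simp), h (-1) (by simp)]

theorem bddO (lam : BAMeasure 𝒜) (B : Set Ω) :
    BddBelow {x | ∃ A ∈ 𝒜.sets, B ⊆ A ∧ x = var lam A} := by
  refine ⟨0, ?_⟩
  rintro x ⟨A, -, -, rfl⟩
  exact var_nonneg lam A

theorem univ_mem' : (univ : Set Ω) ∈ 𝒜.sets := by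
  simpa using 𝒜.compl_mem 𝒜.empty_mem

theorem neO (lam : BAMeasure 𝒜) (B : Set Ω) :
    {x | ∃ A ∈ 𝒜.sets, B ⊆ A ∧ x = var lam A}.Nonempty :=
  ⟨_, univ, univ_mem', subset_univ _, rfl⟩

theorem outer_nonneg (lam : BAMeasure 𝒜) (B : Set Ω) : 0 ≤ outer lam B := by
  refine le_csInf (neO lam B) ?_
  rintro x ⟨A, -, -, rfl⟩
  exact var_nonneg lam A

theorem outer_mono (lam : BAMeasure 𝒜) {B C : Set Ω} (h : B ⊆ C) :
    outer lam B ≤ outer lam C := by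
  refine le_csInf (neO lam C) ?_
  rintro x ⟨A, hA, hCA, rfl⟩
  exact csInf_le (bddO lam B) ⟨A, hA, h.trans hCA, rfl⟩

theorem outer_empty (lam : BAMeasure 𝒜) : outer lam ∅ ≤ 0 :=
  csInf_le (bddO lam ∅) ⟨∅, 𝒜.empty_mem, subset_rfl, (var_empty lam).symm⟩

theorem outer_union (lam : BAMeasure 𝒜) (B C : Set Ω) :
    outer lam (B ∪ C) ≤ outer lam B + outer lam C := by
  refine le_of_forall_pos_lt_add fun ε hε => ?_
  obtain ⟨_, ⟨A, hA, hBA, rfl⟩, h1⟩ :=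
    exists_lt_of_csInf_lt (neO lam B) (lt_add_of_pos_right (outer lam B) (half_pos hε))
  obtain ⟨_, ⟨D, hD, hCD, rfl⟩, h2⟩ :=
    exists_lt_of_csInf_lt (neO lam C) (lt_add_of_pos_right (outer lam C) (half_pos hε))
  have h3 : outer lam (B ∪ C) ≤ var lam (A ∪ D) :=
    csInf_le (bddO lam _) ⟨_, 𝒜.union_mem hA hD, union_subset_union hBA hCD, rfl⟩
  linarith [var_union lam (B := D) hA]

theorem outer_biUnion (lam : BAMeasure 𝒜) (E : ℕ → Set Ω) (K : ℕ) :
    outer lam (⋃ k ∈ Finset.range K, E k) ≤ ∑ k ∈ Finset.range K, outer lam (E k) := by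
  induction K with
  | zero => simpa using outer_empty lam
  | succ K ih =>
    rw [Finset.sum_range_succ, Finset.range_add_one, Finset.set_biUnion_insert, union_comm]
    exact (outer_union lam _ _).trans (by linarith)

theorem L0_tail (lam : BAMeasure 𝒜) {f : Ω → ℝ} (hf : f ∈ L0 lam) (a : ℝ) (ha : 0 < a) :
    Tendsto (fun c : ℝ => outer lam {ω | c < a * |f ω|}) atTop (𝓝 0) := by
  rw [Metric.tendsto_atTop]
  intro ε hε
  obtain ⟨s, hs, hc⟩ := hf
  obtain ⟨N, hN⟩ := ((hc 1 one_pos).eventually (gt_mem_nhds hε)).exists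
  obtain ⟨M, hM⟩ := ((hs N).1.image (fun x : ℝ => |x|)).bddAbove
  refine ⟨a * (M + 1), fun c hcM => ?_⟩
  rw [Real.dist_eq, sub_zero, abs_of_nonneg (outer_nonneg lam _)]
  refine (outer_mono lam ?_).trans_lt hN
  intro ω hω
  simp only [mem_setOf_eq] at hω ⊢
  have h1 : M + 1 < |f ω| := lt_of_mul_lt_mul_left (hcM.trans_lt hω) ha.le
  have h2 : |s N ω| ≤ M := hM ⟨_, ⟨ω, rfl⟩, rfl⟩
  have h3 := abs_sub_abs_le_abs_sub (f ω) (s N ω)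
  rw [abs_sub_comm] at h3
  linarith

/-- Lemma 27: every sequence in `L⁰(λ)` that `λ`-converges to `0` has a subsequence
`(f_{n_k})` for which the set of subconvex combinations `Σ_k α_k 2^k |f_{n_k}|` is bounded
in `L⁰(λ)`. -/
theorem stmt_15 {Ω : Type*} {𝒜 : SetAlg Ω} (lam : BAMeasure 𝒜)
    (f : ℕ → Ω → ℝ) (hf : ∀ n, f n ∈ L0 lam) (hconv : LConv lam f 0) :
    ∃ n : ℕ → ℕ, StrictMono n ∧
      BddL0 lam {h : Ω → ℝ | ∃ (K : ℕ) (α : Fin K → ℝ),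
        (∀ k, 0 ≤ α k) ∧ (∑ k, α k) ≤ 1 ∧
        h = fun ω => ∑ k : Fin K, α k * 2 ^ ((k : ℕ) + 1) * |f (n k) ω|} := by
  have hsub : ∀ k : ℕ, ∀ᶠ m in atTop,
      outer lam {ω | (1 / 2 : ℝ) ^ (k + 1) < |f m ω|} < (1 / 2 : ℝ) ^ (k + 1) := by
    intro k
    have h := hconv ((1 / 2 : ℝ) ^ (k + 1)) (by positivity)
    simp only [Pi.zero_apply, sub_zero] at h
    exact h.eventually (gt_mem_nhds (by positivity))
  obtain ⟨n, hn, hn2⟩ := extraction_forall_of_eventually hsub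
  refine ⟨n, hn, ?_⟩
  set a : ℝ → ℕ → ℝ := fun c k => outer lam {ω | c < 2 ^ (k + 1) * |f (n k) ω|} with ha
  have hsum : Summable (fun k : ℕ => (1 / 2 : ℝ) ^ (k + 1)) :=
    (summable_nat_add_iff 1).2 summable_geometric_two
  have hdom : ∀ c ≥ (1 : ℝ), ∀ k, a c k ≤ (1 / 2 : ℝ) ^ (k + 1) := by
    intro c hc k
    refine (outer_mono lam ?_).trans (hn2 k).le
    intro ω hω
    simp only [mem_setOf_eq] at hω ⊢
    have hp : (0 : ℝ) < 2 ^ (k + 1) := by positivity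
    rw [one_div, inv_pow, inv_lt_iff_one_lt_mul₀' hp]
    linarith
  have ha0 : ∀ c k, 0 ≤ a c k := fun c k => outer_nonneg lam _
  have hlim : Tendsto (fun c => ∑' k, a c k) atTop (𝓝 (∑' _ : ℕ, (0 : ℝ))) := by
    refine tendsto_tsum_of_dominated_convergence hsum
      (fun k => L0_tail lam (hf (n k)) _ (by positivity)) ?_
    filter_upwards [eventually_ge_atTop (1 : ℝ)] with c hc k
    rw [Real.norm_of_nonneg (ha0 c k)]
    exact hdom c hc k
  rw [tsum_zero] at hlim
  intro ε hε
  obtain ⟨c₁, hc₁⟩ := eventually_atTop.1 (hlim.eventually (gt_mem_nhds hε))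
  refine ⟨max c₁ 1, fun c hc h hh => ?_⟩
  obtain ⟨K, α, hα, hα1, rfl⟩ := hh
  have hc1 : 1 ≤ c := (le_max_right _ _).trans hc
  refine lt_of_le_of_lt ?_ (hc₁ c ((le_max_left _ _).trans hc))
  refine le_trans ?_ ((Summable.of_nonneg_of_le (ha0 c) (hdom c hc1) hsum).sum_le_tsum
    (Finset.range K) (fun k _ => ha0 c k))
  refine le_trans (outer_mono lam ?_) (outer_biUnion lam _ K)
  intro ω hω
  simp only [mem_setOf_eq] at hω
  by_contra hcon
  simp only [mem_iUnion, not_exists, Finset.mem_range, mem_setOf_eq, not_lt] at hcon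
  rw [abs_of_nonneg (Finset.sum_nonneg fun k _ => by
    have := hα k
    positivity)] at hω
  have : ∑ k : Fin K, α k * 2 ^ ((k : ℕ) + 1) * |f (n k) ω| ≤ ∑ k : Fin K, α k * c := by
    refine Finset.sum_le_sum fun k _ => ?_
    rw [mul_assoc]
    exact mul_le_mul_of_nonneg_left (hcon k k.2) (hα k)
  rw [← Finset.sum_mul] at this
  nlinarith

end FA
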